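/- arXiv:2103.04334 — 9 statements merged into one kernel-verified Lean document; each statement's English description precedes it below -/
import Mathlib

section
/- Let F be a field with char F ≠ 2 and char F ≠ 3, and let M be a Malcev algebra over F satisfying the identity h(y,z,t,x,u) = 0 for all y, z, t, x, u ∈ M. Then for all x, y, z, t, u ∈ M: (i) p(x,y,z,t)·u = p(xu, y, z, t), and (ii) p(x, y, z, ut) = p(x, u, t, yz). -/
open TensorProduct

/-- Multiplication of the 7-dimensional simple non-Lie Malcev algebra `M₇(F)`,
realised on `Fin 7 → F`; the index `t` corresponds to the basis element `e_{t+1}`. -/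
def m7mul {F : Type*} [Field F] (a b : Fin 7 → F) : Fin 7 → F :=
  ![(a 1 * b 4 - a 4 * b 1) + (a 2 * b 5 - a 5 * b 2) + (a 3 * b 6 - a 6 * b 3),
    2 * (a 0 * b 1 - a 1 * b 0) - 2 * (a 5 * b 6 - a 6 * b 5),
    2 * (a 0 * b 2 - a 2 * b 0) + 2 * (a 4 * b 6 - a 6 * b 4),
    2 * (a 0 * b 3 - a 3 * b 0) - 2 * (a 4 * b 5 - a 5 * b 4),
    -2 * (a 0 * b 4 - a 4 * b 0) + 2 * (a 2 * b 3 - a 3 * b 2),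
    -2 * (a 0 * b 5 - a 5 * b 0) - 2 * (a 1 * b 3 - a 3 * b 1),
    -2 * (a 0 * b 6 - a 6 * b 0) + 2 * (a 1 * b 2 - a 2 * b 1)]

/-- Multiplication of the 7-dimensional Malcev algebra `𝕄₇(γ)` coming from the
division Cayley–Dickson algebra, realised on `Fin 7 → F`; the indices
`0,…,6` correspond to the basis `i, j, k, v, vi, vj, vk`. -/
def mGammaMul {F : Type*} [Field F] (γ : F) (a b : Fin 7 → F) : Fin 7 → F :=
  ![2 * (a 1 * b 2 - a 2 * b 1) + 2 * γ * (a 3 * b 4 - a 4 * b 3)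
      + 2 * γ * (a 5 * b 6 - a 6 * b 5),
    -2 * (a 0 * b 2 - a 2 * b 0) + 2 * γ * (a 3 * b 5 - a 5 * b 3)
      - 2 * γ * (a 4 * b 6 - a 6 * b 4),
    2 * (a 0 * b 1 - a 1 * b 0) + 2 * γ * (a 3 * b 6 - a 6 * b 3)
      + 2 * γ * (a 4 * b 5 - a 5 * b 4),
    2 * (a 0 * b 4 - a 4 * b 0) + 2 * (a 1 * b 5 - a 5 * b 1)
      + 2 * (a 2 * b 6 - a 6 * b 2),
    -2 * (a 0 * b 3 - a 3 * b 0) - 2 * (a 1 * b 6 - a 6 * b 1)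
      + 2 * (a 2 * b 5 - a 5 * b 2),
    2 * (a 0 * b 6 - a 6 * b 0) - 2 * (a 1 * b 3 - a 3 * b 1)
      - 2 * (a 2 * b 4 - a 4 * b 2),
    -2 * (a 0 * b 5 - a 5 * b 0) + 2 * (a 1 * b 4 - a 4 * b 1)
      - 2 * (a 2 * b 3 - a 3 * b 2)]

/-- The Jacobian `J(x,y,z) = (xy)z + (yz)x + (zx)y` of a multiplication. -/
def malJac {A : Type*} [Add A] (mul : A → A → A) (x y z : A) : A :=
  mul (mul x y) z + mul (mul y z) x + mul (mul z x) y

/-- `mul` is a Malcev multiplication: `x·x = 0` and `J(x,y,xz) = J(x,y,z)·x`. -/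
def IsMalcevFun {A : Type*} [AddCommGroup A] (mul : A → A → A) : Prop :=
  (∀ x, mul x x = 0) ∧
    ∀ x y z, malJac mul x y (mul x z) = mul (malJac mul x y z) x

/-- `e 0, …, e 6` is a copy of the standard basis `e₁, …, e₇` of `M₇(F)`:
linearly independent elements multiplying according to the `M₇(F)` table. -/
def IsM7Copy {F M : Type*} [Field F] [AddCommGroup M] [Module F M]
    (mul : M →ₗ[F] M →ₗ[F] M) (e : Fin 7 → M) : Prop :=
  LinearIndependent F e ∧
  (∀ s t : Fin 7, mul (e s) (e t) = - mul (e t) (e s)) ∧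
  mul (e 0) (e 1) = (2 : F) • e 1 ∧
  mul (e 0) (e 2) = (2 : F) • e 2 ∧
  mul (e 0) (e 3) = (2 : F) • e 3 ∧
  mul (e 0) (e 4) = (-2 : F) • e 4 ∧
  mul (e 0) (e 5) = (-2 : F) • e 5 ∧
  mul (e 0) (e 6) = (-2 : F) • e 6 ∧
  mul (e 1) (e 2) = (2 : F) • e 6 ∧
  mul (e 1) (e 3) = (-2 : F) • e 5 ∧
  mul (e 1) (e 4) = e 0 ∧
  mul (e 1) (e 5) = 0 ∧
  mul (e 1) (e 6) = 0 ∧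
  mul (e 2) (e 3) = (2 : F) • e 4 ∧
  mul (e 2) (e 4) = 0 ∧
  mul (e 2) (e 5) = e 0 ∧
  mul (e 2) (e 6) = 0 ∧
  mul (e 3) (e 4) = 0 ∧
  mul (e 3) (e 5) = 0 ∧
  mul (e 3) (e 6) = e 0 ∧
  mul (e 4) (e 5) = (-2 : F) • e 3 ∧
  mul (e 4) (e 6) = (2 : F) • e 2 ∧
  mul (e 5) (e 6) = (-2 : F) • e 1

/-- `e 0, …, e 6` is a copy of the basis `i, j, k, v, vi, vj, vk` of `𝕄₇(γ)`:
linearly independent elements multiplying according to the `𝕄₇(γ)` table. -/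
def IsMGammaCopy {F M : Type*} [Field F] [AddCommGroup M] [Module F M]
    (γ : F) (mul : M →ₗ[F] M →ₗ[F] M) (e : Fin 7 → M) : Prop :=
  LinearIndependent F e ∧
  (∀ s t : Fin 7, mul (e s) (e t) = - mul (e t) (e s)) ∧
  mul (e 0) (e 1) = (2 : F) • e 2 ∧
  mul (e 0) (e 2) = (-2 : F) • e 1 ∧
  mul (e 0) (e 3) = (-2 : F) • e 4 ∧
  mul (e 0) (e 4) = (2 : F) • e 3 ∧
  mul (e 0) (e 5) = (-2 : F) • e 6 ∧
  mul (e 0) (e 6) = (2 : F) • e 5 ∧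
  mul (e 1) (e 2) = (2 : F) • e 0 ∧
  mul (e 1) (e 3) = (-2 : F) • e 5 ∧
  mul (e 1) (e 4) = (2 : F) • e 6 ∧
  mul (e 1) (e 5) = (2 : F) • e 3 ∧
  mul (e 1) (e 6) = (-2 : F) • e 4 ∧
  mul (e 2) (e 3) = (-2 : F) • e 6 ∧
  mul (e 2) (e 4) = (-2 : F) • e 5 ∧
  mul (e 2) (e 5) = (2 : F) • e 4 ∧
  mul (e 2) (e 6) = (2 : F) • e 3 ∧
  mul (e 3) (e 4) = (2 * γ) • e 0 ∧
  mul (e 3) (e 5) = (2 * γ) • e 1 ∧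
  mul (e 3) (e 6) = (2 * γ) • e 2 ∧
  mul (e 4) (e 5) = (2 * γ) • e 2 ∧
  mul (e 4) (e 6) = (-(2 * γ)) • e 1 ∧
  mul (e 5) (e 6) = (2 * γ) • e 0

/-- The multiplication of the split null extension `E = M ⊕ V` of a Malcev
algebra `M` by a module `V` with representation `ρ`:
`(x + v)(y + w) = xy + (ρ_y v − ρ_x w)`. -/
def sneFun {F M V : Type*} [Field F] [AddCommGroup M] [Module F M]
    [AddCommGroup V] [Module F V]
    (mul : M → M → M) (ρ : M →ₗ[F] Module.End F V) (p q : M × V) : M × V :=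
  (mul p.1 q.1, ρ q.1 p.2 - ρ p.1 q.2)

/-- The function `{x,y,z} = (xy)z − (xz)y + 2x(yz)`. -/
def trip (F : Type*) {A : Type*} [Field F] [AddCommGroup A] [Module F A]
    (mul : A → A → A) (x y z : A) : A :=
  mul (mul x y) z - mul (mul x z) y + (2 : F) • mul x (mul y z)

/-- The function `h(y,z,t,x,u) = {yz,t,u}x + {yz,t,x}u + {yx,z,u}t + {yu,z,x}t`. -/
def hfun (F : Type*) {A : Type*} [Field F] [AddCommGroup A] [Module F A]
    (mul : A → A → A) (y z t x u : A) : A :=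
  mul (trip F mul (mul y z) t u) x + mul (trip F mul (mul y z) t x) u
    + mul (trip F mul (mul y x) z u) t + mul (trip F mul (mul y u) z x) t

/-- The function `p(x,y,z,t) = −{zt,x,y} − {yt,z,x} + {xt,y,z}`. -/
def pfun (F : Type*) {A : Type*} [Field F] [AddCommGroup A] [Module F A]
    (mul : A → A → A) (x y z t : A) : A :=
  - trip F mul (mul z t) x y - trip F mul (mul y t) z x + trip F mul (mul x t) y z

/-- `α` belongs to the centroid `Γ(M)`: `(xα)y = (xy)α = x(yα)` for all `x, y`. -/
def IsCentroidElem {F M : Type*} [Field F] [AddCommGroup M] [Module F M]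
    (mul : M →ₗ[F] M →ₗ[F] M) (α : M →ₗ[F] M) : Prop :=
  ∀ x y : M, mul (α x) y = α (mul x y) ∧ mul x (α y) = α (mul x y)


/-- Linearization of the Malcev identity in its first variable. -/
theorem malcev_lin {F M : Type*} [Field F] [AddCommGroup M] [Module F M]
    (mul : M →ₗ[F] M →ₗ[F] M)
    (hmalcev : IsMalcevFun (fun x y : M => mul x y)) (x w y z : M) :
    malJac (fun x y : M => mul x y) x y (mul w z)
      + malJac (fun x y : M => mul x y) w y (mul x z)
      - mul (malJac (fun x y : M => mul x y) x y z) w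
      - mul (malJac (fun x y : M => mul x y) w y z) x = 0 := by
  have h1 := hmalcev.2 (x + w) y z
  have h2 := hmalcev.2 x y z
  have h3 := hmalcev.2 w y z
  simp only [malJac, map_add, LinearMap.add_apply] at h1 h2 h3 ⊢
  linear_combination (norm := module) h1 - h2 - h3

theorem malcev_anti {F M : Type*} [Field F] [AddCommGroup M] [Module F M]
    (mul : M →ₗ[F] M →ₗ[F] M)
    (hmalcev : IsMalcevFun (fun x y : M => mul x y)) (x y : M) :
    mul x y = - mul y x := by
  have h1 := hmalcev.1 (x + y)
  have h2 := hmalcev.1 x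
  have h3 := hmalcev.1 y
  simp only [map_add, LinearMap.add_apply] at h1 h2 h3
  linear_combination (norm := module) h1 - h2 - h3

set_option linter.unusedSimpArgs false
set_option maxHeartbeats 4000000 in
/-- In a Malcev algebra satisfying `h = 0`, the function `p` satisfies
`p(x,y,z,t)u = p(xu,y,z,t)` and `p(x,y,z,ut) = p(x,u,t,yz)`. -/
theorem stmt6_p_identities
    {F M : Type*} [Field F] [AddCommGroup M] [Module F M]
    (h2 : (2 : F) ≠ 0) (h3 : (3 : F) ≠ 0)
    (mul : M →ₗ[F] M →ₗ[F] M)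
    (hmalcev : IsMalcevFun (fun x y : M => mul x y))
    (hH : ∀ y z t x u : M, hfun F (fun a b : M => mul a b) y z t x u = 0) :
    ∀ x y z t u : M,
      mul (pfun F (fun a b : M => mul a b) x y z t) u
        = pfun F (fun a b : M => mul a b) (mul x u) y z t ∧
      pfun F (fun a b : M => mul a b) x y z (mul u t)
        = pfun F (fun a b : M => mul a b) x u t (mul y z) := by
  intro x y z t u
  have an := malcev_anti mul hmalcev
  have hf := malcev_lin mul hmalcev
  have a0 : mul y x = - mul x y := an _ _
  have a1 : mul z x = - mul x z := an _ _
  have a2 : mul t x = - mul x t := an _ _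
  have a3 : mul u x = - mul x u := an _ _
  have a4 : mul z y = - mul y z := an _ _
  have a5 : mul t y = - mul y t := an _ _
  have a6 : mul u y = - mul y u := an _ _
  have a7 : mul t z = - mul z t := an _ _
  have a8 : mul u z = - mul z u := an _ _
  have a9 : mul u t = - mul t u := an _ _
  have a10 (b c : M) : mul x (mul b c) = - mul (mul b c) x := an _ _
  have a11 (b c : M) : mul y (mul b c) = - mul (mul b c) y := an _ _
  have a12 (b c : M) : mul z (mul b c) = - mul (mul b c) z := an _ _
  have a13 (b c : M) : mul t (mul b c) = - mul (mul b c) t := an _ _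
  have a14 (b c : M) : mul u (mul b c) = - mul (mul b c) u := an _ _
  have a15 (b c d : M) : mul (mul x y) (mul (mul b c) d) = - mul (mul (mul b c) d) (mul x y) := an _ _
  have a16 (b c d : M) : mul (mul x z) (mul (mul b c) d) = - mul (mul (mul b c) d) (mul x z) := an _ _
  have a17 (b c d : M) : mul (mul x t) (mul (mul b c) d) = - mul (mul (mul b c) d) (mul x t) := an _ _
  have a18 (b c d : M) : mul (mul x u) (mul (mul b c) d) = - mul (mul (mul b c) d) (mul x u) := an _ _
  have a19 (b c d : M) : mul (mul y z) (mul (mul b c) d) = - mul (mul (mul b c) d) (mul y z) := an _ _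
  have a20 (b c d : M) : mul (mul y t) (mul (mul b c) d) = - mul (mul (mul b c) d) (mul y t) := an _ _
  have a21 (b c d : M) : mul (mul y u) (mul (mul b c) d) = - mul (mul (mul b c) d) (mul y u) := an _ _
  have a22 (b c d : M) : mul (mul z t) (mul (mul b c) d) = - mul (mul (mul b c) d) (mul z t) := an _ _
  have a23 (b c d : M) : mul (mul z u) (mul (mul b c) d) = - mul (mul (mul b c) d) (mul z u) := an _ _
  have a24 (b c d : M) : mul (mul t u) (mul (mul b c) d) = - mul (mul (mul b c) d) (mul t u) := an _ _
  have a25 : mul (mul z t) (mul x y) = - mul (mul x y) (mul z t) := an _ _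
  have a26 : mul (mul z u) (mul x y) = - mul (mul x y) (mul z u) := an _ _
  have a27 : mul (mul t u) (mul x y) = - mul (mul x y) (mul t u) := an _ _
  have a28 : mul (mul y t) (mul x z) = - mul (mul x z) (mul y t) := an _ _
  have a29 : mul (mul y u) (mul x z) = - mul (mul x z) (mul y u) := an _ _
  have a30 : mul (mul t u) (mul x z) = - mul (mul x z) (mul t u) := an _ _
  have a31 : mul (mul y z) (mul x t) = - mul (mul x t) (mul y z) := an _ _
  have a32 : mul (mul y u) (mul x t) = - mul (mul x t) (mul y u) := an _ _
  have a33 : mul (mul z u) (mul x t) = - mul (mul x t) (mul z u) := an _ _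
  have a34 : mul (mul y z) (mul x u) = - mul (mul x u) (mul y z) := an _ _
  have a35 : mul (mul y t) (mul x u) = - mul (mul x u) (mul y t) := an _ _
  have a36 : mul (mul z t) (mul x u) = - mul (mul x u) (mul z t) := an _ _
  have a37 : mul (mul t u) (mul y z) = - mul (mul y z) (mul t u) := an _ _
  have a38 : mul (mul z u) (mul y t) = - mul (mul y t) (mul z u) := an _ _
  have a39 : mul (mul z t) (mul y u) = - mul (mul y u) (mul z t) := an _ _
  constructor
  · have r0 := hf x t (mul y z) u
    have r1 := hf z u (mul x y) t
    have r2 := hf x z (mul t u) y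
    have r3 := hf (mul x u) y t z
    have r4 := congrArg (fun w => mul w u) (hf y t z x)
    have r5 := hf y t z (mul x u)
    have r6 := hf (mul x u) y z t
    have r7 := congrArg (fun w => mul w z) (hf x t y u)
    have r8 := congrArg (fun w => mul w u) (hf x t z y)
    have r9 := hf y u (mul z t) x
    have r10 := congrArg (fun w => mul w z) (hf x t u y)
    have r11 := hH t z x y u
    have r12 := hH z y u x t
    have r13 := hH y t u x z
    have r14 := congrArg (fun w => mul w u) (hf x y t z)
    simp only [malJac, trip, hfun, pfun, map_add, map_sub, map_neg, map_smul, map_zero, LinearMap.add_apply, LinearMap.sub_apply,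
      LinearMap.neg_apply, LinearMap.smul_apply, LinearMap.zero_apply, a0, a1, a2, a3, a4, a5, a6, a7, a8, a9, a10, a11, a12, a13, a14, a15, a16, a17, a18, a19, a20, a21, a22, a23, a24, a25, a26, a27, a28, a29, a30, a31, a32, a33, a34, a35, a36, a37, a38, a39] at r0 r1 r2 r3 r4 r5 r6 r7 r8 r9 r10 r11 r12 r13 r14 ⊢
    linear_combination (norm := module) (-1 : F) • r0 + (-1 : F) • r1 + (1 : F) • r2 + (-1 : F) • r3 + (-1 : F) • r4 + (1 : F) • r5 + (1 : F) • r6 + (-1 : F) • r7 + (-1 : F) • r8 + (1 : F) • r9 + (-1 : F) • r10 + (-1 : F) • r11 + (1 : F) • r12 + (1 : F) • r13 + (1 : F) • r14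
  · have r0 := hf y t (mul x z) u
    have r1 := hf x u t (mul y z)
    have r2 := hf x t (mul y z) u
    have r3 := congrArg (fun w => mul w t) (hf x y u z)
    have r4 := congrArg (fun w => mul w t) (hf x u z y)
    have r5 := hf (mul t u) z x y
    have r6 := congrArg (fun w => mul w t) (hf y u z x)
    have r7 := hf (mul t u) z y x
    have r8 := hf y u z (mul x t)
    have r9 := hf x z (mul y u) t
    have r10 := hf (mul y z) t u x
    have r11 := hf (mul x t) y z u
    have r12 := hf (mul x t) z u y
    have r13 := hf (mul y z) t x u
    have r14 := hf x t (mul y u) z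
    have r15 := hf x y z (mul t u)
    have r16 := hf (mul t u) y z x
    have r17 := hH u x z y t
    have r18 := hH x t y z u
    simp only [malJac, trip, hfun, pfun, map_add, map_sub, map_neg, map_smul, map_zero, LinearMap.add_apply, LinearMap.sub_apply,
      LinearMap.neg_apply, LinearMap.smul_apply, LinearMap.zero_apply, a0, a1, a2, a3, a4, a5, a6, a7, a8, a9, a10, a11, a12, a13, a14, a15, a16, a17, a18, a19, a20, a21, a22, a23, a24, a25, a26, a27, a28, a29, a30, a31, a32, a33, a34, a35, a36, a37, a38, a39] at r0 r1 r2 r3 r4 r5 r6 r7 r8 r9 r10 r11 r12 r13 r14 r15 r16 r17 r18 ⊢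
    linear_combination (norm := module) (1 : F) • r0 + (-1 : F) • r1 + (2 : F) • r2 + (-1 : F) • r3 + (1 : F) • r4 + (-1 : F) • r5 + (1 : F) • r6 + (-1 : F) • r7 + (-1 : F) • r8 + (1 : F) • r9 + (-1 : F) • r10 + (-1 : F) • r11 + (1 : F) • r12 + (1 : F) • r13 + (1 : F) • r14 + (1 : F) • r15 + (2 : F) • r16 + (1 : F) • r17 + (-1 : F) • r18
end

section
/- Let F be a field with char F ≠ 2 and char F ≠ 3, and let A be an F-algebra whose bilinear multiplication satisfies the alternative laws (xx)y = x(xy) and y(xx) = (yx)x for all x, y ∈ A. Define the commutator [x,y] = xy − yx. Then A with the product [ , ] is a Malcev algebra: [x,x] = 0 for all x, and J(x,y,[x,z]) = [J(x,y,z), x] for all x, y, z ∈ A, where J(x,y,z) = [[x,y],z] + [[y,z],x] + [[z,x],y]. -/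
open TensorProduct

/-- The commutator algebra of an alternative algebra is a Malcev algebra. -/
theorem stmt7_alternative_minus_is_malcev
    {F A : Type*} [Field F] [AddCommGroup A] [Module F A]
    (h2 : (2 : F) ≠ 0) (h3 : (3 : F) ≠ 0)
    (mul : A →ₗ[F] A →ₗ[F] A)
    (haltL : ∀ x y : A, mul (mul x x) y = mul x (mul x y))
    (haltR : ∀ x y : A, mul y (mul x x) = mul (mul y x) x) :
    IsMalcevFun (fun x y : A => mul x y - mul y x) := by
  have lL : ∀ x y z : A, mul (mul x y) z + mul (mul y x) z = mul x (mul y z) + mul y (mul x z) := by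
    intro x y z
    have h := haltL (x + y) z
    simp only [map_add, LinearMap.add_apply] at h
    linear_combination (norm := module) h - haltL x z - haltL y z
  have lR : ∀ x y z : A, mul z (mul x y) + mul z (mul y x) = mul (mul z x) y + mul (mul z y) x := by
    intro x y z
    have h := haltR (x + y) z
    simp only [map_add, LinearMap.add_apply] at h
    linear_combination (norm := module) h - haltR x z - haltR y z
  -- the associator
  obtain ⟨as, has⟩ : ∃ as : A → A → A → A,
      ∀ x y z, as x y z = mul (mul x y) z - mul x (mul y z) := ⟨_, fun _ _ _ => rfl⟩
  have s12 : ∀ x y z, as y x z = - as x y z := by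
    intro x y z
    simp only [has]
    linear_combination (norm := module) lL x y z
  have s23 : ∀ x y z, as x z y = - as x y z := by
    intro x y z
    simp only [has]
    linear_combination (norm := module) - lR y z x
  have a12 : ∀ x z, as x x z = 0 := by
    intro x z
    rw [has, haltL, sub_self]
  have a23 : ∀ x z, as z x x = 0 := by
    intro x z
    rw [has, haltR, sub_self]
  -- the Teichmüller identity
  have T : ∀ w x y z, as (mul w x) y z - as w (mul x y) z + as w x (mul y z)
      = mul w (as x y z) + mul (as w x y) z := by
    intro w x y z
    simp only [has, map_sub, LinearMap.sub_apply]
    abel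
  -- the Jacobian of the commutator is six times the associator
  have hJ : ∀ x y z, malJac (fun x y : A => mul x y - mul y x) x y z = (6 : F) • as x y z := by
    intro x y z
    have e1 := s12 x y z
    have e2 := s23 x y z
    have e3 : as y z x = as x y z := by rw [s23 y x z, s12 x y z, neg_neg]
    have e4 : as z x y = as x y z := by rw [s12 x z y, s23 x y z, neg_neg]
    have e5 : as z y x = - as x y z := by rw [s12 y z x, e3]
    have e : malJac (fun x y : A => mul x y - mul y x) x y z
        = as x y z + as y z x + as z x y - as y x z - as x z y - as z y x := by
      simp only [malJac, has, map_sub, LinearMap.sub_apply]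
      abel
    rw [e, e1, e2, e3, e4, e5]
    module
  -- the two key identities
  have key : ∀ x y z, as x y (mul x z) = mul (as x y z) x ∧
      as x y (mul z x) = mul x (as x y z) := by
    intro x y z
    have t1 := T x x z y
    have t2 := T y z x x
    have t3 := T z y x x
    have t4 := T y x x z
    have c3 : ∀ x y z, as y z x = as x y z := by
      intro x y z
      rw [s23 y x z, s12 x y z, neg_neg]
    -- normalise all associators
    have p1 := s23 (mul x x) y z
    have p2 := c3 y z (mul x x)
    have p3 := c3 (mul x x) y z
    have p4 := s23 z y (mul x x)
    have p5 := s12 y z (mul x x)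
    have p6 := s12 y (mul x x) z
    have q1 := s23 x (mul x z) y
    have q2 := s12 x y (mul x z)
    have r1 := c3 y (mul z x) x
    have r2 := s12 x y (mul z x)
    have r3 := s23 y x (mul z x)
    have b1 := c3 z (mul y x) x
    have b2 := c3 (mul y x) x z
    have i1 := c3 x y z
    have i2 := s12 y z x
    have i3 := s23 x y z
    simp only [a12, a23, i1, i2, i3, map_neg, LinearMap.neg_apply, map_zero, LinearMap.zero_apply] at t1 t2 t3 t4
    have k : as x y (mul x z) = mul (as x y z) x := by
      linear_combination (norm := module) q2 - t4 + b1 - t3 + p5 - p3 - p6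
    refine ⟨k, ?_⟩
    linear_combination (norm := module) r2 - r3 - t2 + p3 + p1 - t1 - q1 + k
  refine ⟨fun x => sub_self _, fun x y z => ?_⟩
  rw [hJ, hJ]
  obtain ⟨k1, k2⟩ := key x y z
  have hl : as x y (mul x z - mul z x) = as x y (mul x z) - as x y (mul z x) := by
    simp only [has, map_sub]
    abel
  simp only [hl, k1, k2, map_smul, LinearMap.smul_apply, smul_sub]
end

section
/- Let F be a field with char F ≠ 2 and char F ≠ 3. The 7-dimensional F-algebra M₇(F), defined on the basis e₁,…,e₇ by the given anticommutative multiplication table, is a Malcev algebra: it satisfies x·x = 0 for all x and the Malcev identity J(x,y,xz) = J(x,y,z)·x for all x, y, z, where J(x,y,z) = (xy)z + (yz)x + (zx)y. -/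
open TensorProduct

/-- `M₇(F)` is a Malcev algebra. -/
theorem stmt8_M7_is_malcev
    {F : Type*} [Field F] (h2 : (2 : F) ≠ 0) (h3 : (3 : F) ≠ 0) :
    IsMalcevFun (fun a b : Fin 7 → F => m7mul a b) := by
  refine ⟨fun x => ?_, fun x y z => ?_⟩
  · funext i
    fin_cases i <;> simp [m7mul] <;> ring
  · funext i
    fin_cases i <;>
      simp only [malJac, m7mul, Pi.add_apply, Fin.zero_eta, Fin.mk_one, Fin.reduceFinMk,
        Matrix.cons_val] <;> ring
end

section
/- Let F be a field with char F ≠ 2 and char F ≠ 3, and let γ ∈ F. The 7-dimensional F-algebra 𝕄₇(γ), defined on the basis i, j, k, v, vi, vj, vk by the given anticommutative multiplication table, is a Malcev algebra: it satisfies x·x = 0 for all x and the Malcev identity J(x,y,xz) = J(x,y,z)·x for all x, y, z, where J(x,y,z) = (xy)z + (yz)x + (zx)y. -/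
open TensorProduct

set_option maxHeartbeats 4000000 in
/-- `𝕄₇(γ)` is a Malcev algebra. -/
theorem stmt10_MGamma_is_malcev
    {F : Type*} [Field F] (h2 : (2 : F) ≠ 0) (h3 : (3 : F) ≠ 0) (γ : F) :
    IsMalcevFun (fun a b : Fin 7 → F => mGammaMul γ a b) := by
  constructor
  · intro x
    funext t
    fin_cases t <;> simp [mGammaMul] <;> ring
  · intro x y z
    funext t
    fin_cases t <;>
      simp only [malJac, mGammaMul, Pi.add_apply, Fin.zero_eta, Fin.mk_one, Fin.reduceFinMk, Fin.isValue,
        Matrix.cons_val] <;>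
      ring
end

section
/- Let F be a field with char F ≠ 2 and char F ≠ 3, and let M be a Malcev algebra over F containing a copy of M₇(F) (linearly independent e₁,…,e₇ multiplying per the M₇(F) table) such that for every nonzero m ∈ M there exists t with m·e_t ≠ 0. Then the centroid Γ(M) of M is commutative: for all α, β ∈ Γ(M), α∘β = β∘α as linear maps on M. -/
open TensorProduct

/-- The centroid of a Malcev algebra containing `M₇(F)` on which `M₇(F)` acts
without torsion is commutative. -/
theorem stmt11_centroid_commutative
    {F M : Type*} [Field F] [AddCommGroup M] [Module F M]
    (h2 : (2 : F) ≠ 0) (h3 : (3 : F) ≠ 0)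
    (mul : M →ₗ[F] M →ₗ[F] M)
    (hmalcev : IsMalcevFun (fun x y : M => mul x y))
    (e : Fin 7 → M) (he : IsM7Copy mul e)
    (hfaith : ∀ m : M, m ≠ 0 → ∃ t : Fin 7, mul m (e t) ≠ 0) :
    ∀ α β : M →ₗ[F] M, IsCentroidElem mul α → IsCentroidElem mul β →
      α ∘ₗ β = β ∘ₗ α := by
  intro α β hα hβ
  have key : ∀ x y : M, α (β (mul x y)) = β (α (mul x y)) := by
    intro x y
    rw [← (hβ x y).2, ← (hα x (β y)).1, (hβ (α x) y).2, (hα x y).1]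
  ext m
  by_contra hne
  have hsub : α (β m) - β (α m) ≠ 0 := fun h => hne (sub_eq_zero.mp h)
  obtain ⟨t, ht⟩ := hfaith _ hsub
  apply ht
  rw [map_sub, LinearMap.sub_apply, (hα (β m) (e t)).1, (hβ m (e t)).1,
    (hβ (α m) (e t)).1, (hα m (e t)).1, key, sub_self]
end

section
/- Let F be a field with char F ≠ 2 and char F ≠ 3, and let M be a Malcev algebra over F containing a copy of M₇(F) (linearly independent e₁,…,e₇ multiplying per the M₇(F) table). Let α₁,…,α₇ be elements of the centroid Γ(M) such that Σ_{t=1}^{7} e_t α_t = 0. Then e_s α_t = 0 for all s, t ∈ {1,…,7}. -/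
open TensorProduct

set_option maxHeartbeats 2000000 in
/-- Freeness: if centroid elements `α₁,…,α₇` satisfy `Σ e_t α_t = 0` then
`e_s α_t = 0` for all `s, t`. -/
theorem stmt12_freeness
    {F M : Type*} [Field F] [AddCommGroup M] [Module F M]
    (h2 : (2 : F) ≠ 0) (h3 : (3 : F) ≠ 0)
    (mul : M →ₗ[F] M →ₗ[F] M)
    (hmalcev : IsMalcevFun (fun x y : M => mul x y))
    (e : Fin 7 → M) (he : IsM7Copy mul e)
    (α : Fin 7 → (M →ₗ[F] M))
    (hα : ∀ t : Fin 7, IsCentroidElem mul (α t))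
    (hsum : ∑ t : Fin 7, (α t) (e t) = 0) :
    ∀ s t : Fin 7, (α t) (e s) = 0 := by
  obtain ⟨_, hanti, h01, h02, h03, h04, h05, h06, h12, h13, h14, h15, h16, h23, h24, h25, h26,
          h34, h35, h36, h45, h46, h56⟩ := he
  have hsq : ∀ x, mul x x = 0 := hmalcev.1
  have h10 := hanti 1 0
  rw [h01] at h10
  have h20 := hanti 2 0
  rw [h02] at h20
  have h30 := hanti 3 0
  rw [h03] at h30
  have h40 := hanti 4 0
  rw [h04] at h40
  have h50 := hanti 5 0
  rw [h05] at h50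
  have h60 := hanti 6 0
  rw [h06] at h60
  have h21 := hanti 2 1
  rw [h12] at h21
  have h31 := hanti 3 1
  rw [h13] at h31
  have h41 := hanti 4 1
  rw [h14] at h41
  have h51 := hanti 5 1
  rw [h15] at h51
  have h61 := hanti 6 1
  rw [h16] at h61
  have h32 := hanti 3 2
  rw [h23] at h32
  have h42 := hanti 4 2
  rw [h24] at h42
  have h52 := hanti 5 2
  rw [h25] at h52
  have h62 := hanti 6 2
  rw [h26] at h62
  have h43 := hanti 4 3
  rw [h34] at h43
  have h53 := hanti 5 3
  rw [h35] at h53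
  have h63 := hanti 6 3
  rw [h36] at h63
  have h54 := hanti 5 4
  rw [h45] at h54
  have h64 := hanti 6 4
  rw [h46] at h64
  have h65 := hanti 6 5
  rw [h56] at h65
  clear hanti
  rw [Fin.sum_univ_seven] at hsum
  have hc : ∀ t x y, mul x (α t y) = α t (mul x y) := fun t x y => (hα t x y).2
  have step : ∀ t s u, α t (e s) = 0 → α t (mul (e u) (e s)) = 0 := by
    intro t s u h
    rw [← hc, h, map_zero]
  -- from vanishing on `e 0` to vanishing everywhere
  have from0 : ∀ t, α t (e 0) = 0 → ∀ s, α t (e s) = 0 := by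
    intro t h s
    have := step t 0 s h
    fin_cases s <;> simp_all
  have to0 : ∀ t s, α t (e s) = 0 → α t (e 0) = 0 := by
    intro t s h
    have k1 := step t s 1 h
    have k2 := step t s 2 h
    have k3 := step t s 3 h
    have k4 := step t s 4 h
    have k5 := step t s 5 h
    have k6 := step t s 6 h
    fin_cases s <;> simp_all
  have every : ∀ t s, α t (e s) = 0 → ∀ u, α t (e u) = 0 :=
    fun t s h => from0 t (to0 t s h)
  have key : ∀ i, mul (e i) (mul (e i) (α 0 (e 0) + α 1 (e 1) + α 2 (e 2) + α 3 (e 3)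
      + α 4 (e 4) + α 5 (e 5) + α 6 (e 6))) = 0 := by
    intro i
    rw [hsum, map_zero, map_zero]
  simp only [map_add, hc] at key
  have a4 : ∀ u, α 4 (e u) = 0 := by
    refine every 4 1 ?_
    have k := key 1
    simpa [hsq, h2, h01, h02, h03, h04, h05, h06, h12, h13, h14, h15, h16, h23, h24, h25, h26,
          h34, h35, h36, h45, h46, h56, h10, h20, h30, h40, h50, h60, h21, h31, h41, h51, h61,
          h32, h42, h52, h62, h43, h53, h63, h54, h64, h65] using k
  have a5 : ∀ u, α 5 (e u) = 0 := by
    refine every 5 2 ?_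
    have k := key 2
    simpa [hsq, h2, h01, h02, h03, h04, h05, h06, h12, h13, h14, h15, h16, h23, h24, h25, h26,
          h34, h35, h36, h45, h46, h56, h10, h20, h30, h40, h50, h60, h21, h31, h41, h51, h61,
          h32, h42, h52, h62, h43, h53, h63, h54, h64, h65] using k
  have a6 : ∀ u, α 6 (e u) = 0 := by
    refine every 6 3 ?_
    have k := key 3
    simpa [hsq, h2, h01, h02, h03, h04, h05, h06, h12, h13, h14, h15, h16, h23, h24, h25, h26,
          h34, h35, h36, h45, h46, h56, h10, h20, h30, h40, h50, h60, h21, h31, h41, h51, h61,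
          h32, h42, h52, h62, h43, h53, h63, h54, h64, h65] using k
  have a1 : ∀ u, α 1 (e u) = 0 := by
    refine every 1 4 ?_
    have k := key 4
    simpa [hsq, h2, h01, h02, h03, h04, h05, h06, h12, h13, h14, h15, h16, h23, h24, h25, h26,
          h34, h35, h36, h45, h46, h56, h10, h20, h30, h40, h50, h60, h21, h31, h41, h51, h61,
          h32, h42, h52, h62, h43, h53, h63, h54, h64, h65] using k
  have a2 : ∀ u, α 2 (e u) = 0 := by
    refine every 2 5 ?_
    have k := key 5
    simpa [hsq, h2, h01, h02, h03, h04, h05, h06, h12, h13, h14, h15, h16, h23, h24, h25, h26,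
          h34, h35, h36, h45, h46, h56, h10, h20, h30, h40, h50, h60, h21, h31, h41, h51, h61,
          h32, h42, h52, h62, h43, h53, h63, h54, h64, h65] using k
  have a3 : ∀ u, α 3 (e u) = 0 := by
    refine every 3 6 ?_
    have k := key 6
    simpa [hsq, h2, h01, h02, h03, h04, h05, h06, h12, h13, h14, h15, h16, h23, h24, h25, h26,
          h34, h35, h36, h45, h46, h56, h10, h20, h30, h40, h50, h60, h21, h31, h41, h51, h61,
          h32, h42, h52, h62, h43, h53, h63, h54, h64, h65] using k
  have a0 : ∀ u, α 0 (e u) = 0 := by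
    refine every 0 0 ?_
    simpa [a1, a2, a3, a4, a5, a6] using hsum
  intro s t
  fin_cases t
  · exact a0 s
  · exact a1 s
  · exact a2 s
  · exact a3 s
  · exact a4 s
  · exact a5 s
  · exact a6 s
end

section
/- Let F be a field with char F ≠ 2 and char F ≠ 3, and let E be a Malcev algebra over F containing a copy of M₇(F) (linearly independent e₁,…,e₇ multiplying per the M₇(F) table). Let α ∈ Γ(E) be an element of the centroid of E such that (e₂(e₁α))e₃ = e₂((e₁α)e₃), i.e. the associator (e₂, e₁α, e₃) vanishes. Then e_t α = 0 for all t ∈ {1,…,7}. -/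
open TensorProduct

/-- If a centroid element `α` of a Malcev algebra containing `M₇(F)` satisfies
`(e₂, e₁α, e₃) = 0`, then `α` kills the copy of `M₇(F)`. -/
theorem stmt13_associator_kills_centroid
    {F E : Type*} [Field F] [AddCommGroup E] [Module F E]
    (h2 : (2 : F) ≠ 0) (h3 : (3 : F) ≠ 0)
    (mul : E →ₗ[F] E →ₗ[F] E)
    (hmalcev : IsMalcevFun (fun x y : E => mul x y))
    (e : Fin 7 → E) (he : IsM7Copy mul e)
    (α : E →ₗ[F] E) (hα : IsCentroidElem mul α)
    (hassoc : mul (mul (e 1) (α (e 0))) (e 2) = mul (e 1) (mul (α (e 0)) (e 2))) :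
    ∀ t : Fin 7, α (e t) = 0 := by
  obtain ⟨-, hanti, h01, h02, h03, h04, h05, h06, h12, -, -, -, -, -, -, -, -, -, -, h36, -⟩ := he
  have hm2 : (-2 : F) ≠ 0 := neg_ne_zero.mpr h2
  -- the kernel of `α` absorbs products
  have keyR : ∀ (x y z : E) (c : F), c ≠ 0 → mul x y = c • z → α y = 0 → α z = 0 := by
    intro x y z c hc hxy hy
    have h := (hα x y).2
    rw [hy, map_zero, hxy, map_smul] at h
    exact (smul_eq_zero.mp h.symm).resolve_left hc
  have keyL : ∀ (x y z : E) (c : F), c ≠ 0 → mul x y = c • z → α x = 0 → α z = 0 := by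
    intro x y z c hc hxy hx
    have h := (hα x y).1
    rw [hx, map_zero, LinearMap.zero_apply, hxy, map_smul] at h
    exact (smul_eq_zero.mp h.symm).resolve_left hc
  have h8 : (8 : F) • α (e 6) = 0 := by
    rw [(hα _ _).2, (hα _ _).1, (hα _ _).1, (hα _ _).2, hanti 1 0, h01, h02] at hassoc
    simp only [map_neg, map_smul, LinearMap.neg_apply, LinearMap.smul_apply, h12] at hassoc
    have h := sub_eq_zero.mpr hassoc.symm
    rw [← h]
    module
  have h8ne : (8 : F) ≠ 0 := by
    have : (8 : F) = 2 ^ 3 := by norm_num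
    rw [this]
    exact pow_ne_zero 3 h2
  have a6 : α (e 6) = 0 := (smul_eq_zero.mp h8).resolve_left h8ne
  have a0 : α (e 0) = 0 :=
    keyR (e 3) (e 6) (e 0) 1 one_ne_zero (by rw [h36, one_smul]) a6
  intro t
  fin_cases t
  · exact a0
  · exact keyL _ _ _ _ h2 h01 a0
  · exact keyL _ _ _ _ h2 h02 a0
  · exact keyL _ _ _ _ h2 h03 a0
  · exact keyL _ _ _ _ hm2 h04 a0
  · exact keyL _ _ _ _ hm2 h05 a0
  · exact a6
end

section
/- Let F be a field with char F ≠ 2 and char F ≠ 3, and let E be a Malcev algebra over F equipped with an involution x ↦ x̄ such that every symmetric element of E lies in the nucleus of E. Suppose E contains a copy of M₇(F) (linearly independent e₁,…,e₇ multiplying per the M₇(F) table) with ē_t = −e_t for all t. If α ∈ Γ(E) is a centroid element satisfying (xα)‾ = −x̄α for all x ∈ E (i.e. α is skew-adjoint with respect to the involution), then e_t α = 0 for all t ∈ {1,…,7}. -/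
open TensorProduct

/-- In a Malcev algebra with `J`-admissible involution containing `M₇(F)` with
`ē_t = −e_t`, every skew-adjoint centroid element kills the copy of `M₇(F)`. -/
theorem stmt14_skew_centroid_vanishes
    {F E : Type*} [Field F] [AddCommGroup E] [Module F E]
    (h2 : (2 : F) ≠ 0) (h3 : (3 : F) ≠ 0)
    (mul : E →ₗ[F] E →ₗ[F] E)
    (hmalcev : IsMalcevFun (fun x y : E => mul x y))
    (σ : E →ₗ[F] E)
    (hσσ : ∀ x, σ (σ x) = x)
    (hσmul : ∀ x y, σ (mul x y) = mul (σ y) (σ x))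
    (hnuc : ∀ z : E, σ z = z → ∀ x y : E,
      mul (mul z x) y = mul z (mul x y) ∧
      mul (mul x z) y = mul x (mul z y) ∧
      mul (mul x y) z = mul x (mul y z))
    (e : Fin 7 → E) (he : IsM7Copy mul e)
    (hσe : ∀ t : Fin 7, σ (e t) = - e t)
    (α : E →ₗ[F] E) (hα : IsCentroidElem mul α)
    (hskew : ∀ x : E, σ (α x) = - α (σ x)) :
    ∀ t : Fin 7, α (e t) = 0 := by
  obtain ⟨-, -, h01, h02, h03, h04, h05, h06, -, -, h14, -⟩ := he
  have hsym : σ (α (e 0)) = α (e 0) := by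
    rw [hskew, hσe, map_neg, neg_neg]
  -- if `e₀ e_t = c e_t` with `c ≠ 0`, associativity of `(α e₀, e₀, e_t)` kills `α e_t`
  have key : ∀ (c : F) (t : Fin 7), c ≠ 0 → mul (e 0) (e t) = c • e t → α (e t) = 0 := by
    intro c t hc h
    have h1 := (hnuc _ hsym (e 0) (e t)).1
    have h00 : mul (e 0) (e 0) = 0 := hmalcev.1 (e 0)
    rw [(hα _ _).1, (hα _ _).1, h00, h, map_smul, (hα _ _).1, h] at h1
    simp only [map_zero, LinearMap.zero_apply, map_smul] at h1
    have h4 := h1.symm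
    simpa [hc] using h4
  have hn2 : (-2 : F) ≠ 0 := neg_ne_zero.mpr h2
  have k1 := key 2 1 h2 h01
  intro t
  fin_cases t
  · change α (e 0) = 0
    rw [← h14, ← (hα _ _).1, k1]
    simp
  · exact k1
  · exact key 2 2 h2 h02
  · exact key 2 3 h2 h03
  · exact key (-2) 4 hn2 h04
  · exact key (-2) 5 hn2 h05
  · exact key (-2) 6 hn2 h06
end

section
/- Let F be a field with char F ≠ 2 and char F ≠ 3, and let 𝕄 = M₇(F). Every irreducible Malcev module V over 𝕄 is isomorphic to the regular module Reg 𝕄: there exists a bijective F-linear map ψ : 𝕄 → V such that ψ(xa) = ψ(x)·a for all x, a ∈ 𝕄. -/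
open TensorProduct

section M7Irred

/-- Sagle's form of the Malcev identity (doubled), for an abstract biadditive multiplication. -/
lemma sagle_of_malcev {A : Type*} [AddCommGroup A] (mul : A → A → A)
    (hl : ∀ a b c, mul (a + b) c = mul a c + mul b c)
    (hr : ∀ a b c, mul a (b + c) = mul a b + mul a c)
    (hm : IsMalcevFun mul) (x y z t : A) :
    (2 : ℤ) • mul (mul x z) (mul y t) =
      (2 : ℤ) • (mul (mul (mul x y) z) t + mul (mul (mul y z) t) x + mul (mul (mul z t) x) y
        + mul (mul (mul t x) y) z) := by
  have anti : ∀ a b, mul a b = - mul b a := by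
    intro a b
    have h := hm.1 (a + b)
    rw [hl, hr, hr, hm.1, hm.1] at h
    simp only [zero_add, add_zero] at h
    exact eq_neg_of_add_eq_zero_left h
  have nl : ∀ a b, mul (-a) b = - mul a b := by
    intro a b
    have h := hl (-a) a b
    have h0 := hl 0 0 b
    simp only [add_zero, left_eq_add] at h0
    rw [neg_add_cancel, h0] at h
    exact eq_neg_of_add_eq_zero_left h.symm
  have nr : ∀ a b, mul a (-b) = - mul a b := by
    intro a b
    rw [anti, nl, neg_neg, anti a b, neg_neg]
  have lin : ∀ x w y z, malJac mul x y (mul w z) + malJac mul w y (mul x z)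
      = mul (malJac mul x y z) w + mul (malJac mul w y z) x := by
    intro x w y z
    have h1 := hm.2 (x + w) y z
    have h2 := hm.2 x y z
    have h3 := hm.2 w y z
    simp only [malJac, hl, hr] at h1 h2 h3 ⊢
    have h4 := congrArg₂ (· - ·) h1 (congrArg₂ (· + ·) h2 h3)
    rw [← sub_eq_zero] at h4 ⊢
    rw [← h4]
    abel
  have a1 := lin t z x y
  have a2 := lin x z y t
  have a3 := lin y z t x
  have o1 : ∀ a b, mul t (mul a b) = - mul (mul a b) t := fun a b => anti _ _
  have o2 : ∀ a b, mul x (mul a b) = - mul (mul a b) x := fun a b => anti _ _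
  have o3 : ∀ a b, mul y (mul a b) = - mul (mul a b) y := fun a b => anti _ _
  simp only [malJac, hl, anti z y, anti z x, anti z t, anti y x, anti y t, anti x t, nl, nr,
    o1, o2, o3, neg_neg, anti (mul x y) (mul t z), anti (mul x z) (mul t y),
    anti (mul y z) (mul t x)] at a1 a2 a3 ⊢
  have h4 := congrArg₂ (· + ·) (congrArg₂ (· - ·) a1 a2) a3
  rw [← sub_eq_zero] at h4 ⊢
  rw [← h4]
  abel

/-- The operator form of Sagle's identity for a representation of `M₇(F)`. -/
def MI {F V : Type*} [Field F] [AddCommGroup V] [Module F V]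
    (ρ : (Fin 7 → F) →ₗ[F] Module.End F V) : Prop :=
  ∀ (y z t : Fin 7 → F) (v : V),
    ρ (m7mul y t) (ρ z v) = ρ t (ρ z (ρ y v)) - ρ z (ρ y (ρ t v)) - ρ (m7mul (m7mul y z) t) v
      - ρ y (ρ (m7mul z t) v)

variable {F V : Type*} [Field F] [AddCommGroup V] [Module F V]

lemma m7_add_left (a b c : Fin 7 → F) : m7mul (a + b) c = m7mul a c + m7mul b c := by
  ext i; fin_cases i <;> simp [m7mul] <;> ring

lemma m7_add_right (a b c : Fin 7 → F) : m7mul a (b + c) = m7mul a b + m7mul a c := by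
  ext i; fin_cases i <;> simp [m7mul] <;> ring

lemma m7_smul_left (s : F) (a b : Fin 7 → F) : m7mul (s • a) b = s • m7mul a b := by
  ext i; fin_cases i <;> simp [m7mul] <;> ring

lemma m7_smul_right (s : F) (a b : Fin 7 → F) : m7mul a (s • b) = s • m7mul a b := by
  ext i; fin_cases i <;> simp [m7mul] <;> ring

lemma m7_anti (a b : Fin 7 → F) : m7mul a b = - m7mul b a := by
  ext i; fin_cases i <;> simp [m7mul] <;> ring

lemma m7_self (a : Fin 7 → F) : m7mul a a = 0 := by
  ext i; fin_cases i <;> simp [m7mul] <;> ring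

lemma m7_neg_left (a b : Fin 7 → F) : m7mul (-a) b = - m7mul a b := by
  ext i; fin_cases i <;> simp [m7mul] <;> ring

lemma m7_neg_right (a b : Fin 7 → F) : m7mul a (-b) = - m7mul a b := by
  ext i; fin_cases i <;> simp [m7mul] <;> ring

lemma m7_zero_left (b : Fin 7 → F) : m7mul 0 b = 0 := by
  ext i; fin_cases i <;> simp [m7mul]

lemma mi_of_malcev (h2 : (2 : F) ≠ 0) (ρ : (Fin 7 → F) →ₗ[F] Module.End F V)
    (hmod : IsMalcevFun (sneFun m7mul ρ)) : MI ρ := by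
  intro y z t v
  have h := sagle_of_malcev (sneFun m7mul ρ)
    (by intro a b c
        ext1
        · simp [sneFun, m7_add_left]
        · simp only [sneFun, Prod.snd_add, Prod.fst_add, map_add, LinearMap.add_apply]; abel)
    (by intro a b c
        ext1
        · simp [sneFun, m7_add_right]
        · simp only [sneFun, Prod.snd_add, Prod.fst_add, map_add, LinearMap.add_apply]; abel)
    hmod (0, v) (y, 0) (z, 0) (t, 0)
  have h' := congrArg Prod.snd h
  simp only [sneFun, Prod.smul_snd, Prod.snd_add, map_zero, m7_zero_left,
    sub_zero, zero_sub, map_neg] at h'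
  have h'' : (2 : F) • (ρ (m7mul y t) (ρ z v)) = (2 : F) • (ρ t (ρ z (ρ y v)) - ρ z (ρ y (ρ t v))
      - ρ (m7mul (m7mul y z) t) v - ρ y (ρ (m7mul z t) v)) := by
    linear_combination (norm := module) h'
  exact smul_right_injective V h2 h''

/-- A tuple of elements multiplying like the standard basis of `M₇(F)`. -/
structure M7Std (h e1 e2 e3 f1 f2 f3 : Fin 7 → F) : Prop where
  he1 : m7mul h e1 = (2 : F) • e1
  he2 : m7mul h e2 = (2 : F) • e2
  he3 : m7mul h e3 = (2 : F) • e3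
  hf1 : m7mul h f1 = (-2 : F) • f1
  hf2 : m7mul h f2 = (-2 : F) • f2
  hf3 : m7mul h f3 = (-2 : F) • f3
  e12 : m7mul e1 e2 = (2 : F) • f3
  e23 : m7mul e2 e3 = (2 : F) • f1
  e31 : m7mul e3 e1 = (2 : F) • f2
  f12 : m7mul f1 f2 = (-2 : F) • e3
  f23 : m7mul f2 f3 = (-2 : F) • e1
  f31 : m7mul f3 f1 = (-2 : F) • e2
  ef1 : m7mul e1 f1 = h
  ef2 : m7mul e2 f2 = h
  ef3 : m7mul e3 f3 = h
  ef12 : m7mul e1 f2 = 0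
  ef13 : m7mul e1 f3 = 0
  ef21 : m7mul e2 f1 = 0
  ef23 : m7mul e2 f3 = 0
  ef31 : m7mul e3 f1 = 0
  ef32 : m7mul e3 f2 = 0

variable {h e1 e2 e3 f1 f2 f3 : Fin 7 → F}

lemma M7Std.rot (S : M7Std h e1 e2 e3 f1 f2 f3) : M7Std h e2 e3 e1 f2 f3 f1 :=
  ⟨S.he2, S.he3, S.he1, S.hf2, S.hf3, S.hf1, S.e23, S.e31, S.e12, S.f23, S.f31, S.f12,
    S.ef2, S.ef3, S.ef1, S.ef23, S.ef21, S.ef32, S.ef31, S.ef12, S.ef13⟩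

lemma M7Std.flip (S : M7Std h e1 e2 e3 f1 f2 f3) : M7Std (-h) (-f1) (-f2) (-f3) (-e1) (-e2) (-e3) := by
  constructor <;> simp only [m7_neg_left, m7_neg_right, neg_neg, S.he1, S.he2, S.he3, S.hf1,
    S.hf2, S.hf3, S.e12, S.e23, S.e31, S.f12, S.f23, S.f31, m7_anti f1 e1, m7_anti f2 e2,
    m7_anti f3 e3, m7_anti f1 e2, m7_anti f1 e3, m7_anti f2 e1, m7_anti f2 e3, m7_anti f3 e1,
    m7_anti f3 e2, S.ef1, S.ef2, S.ef3, S.ef12, S.ef13, S.ef21, S.ef23, S.ef31, S.ef32,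
    neg_zero] <;> module

variable {ρ : (Fin 7 → F) →ₗ[F] Module.End F V}

/-- The cyclic sum of the operator identity. -/
lemma MI.cyc (hI : MI ρ) (y z t : Fin 7 → F) (v : V) :
    ρ y (ρ (m7mul z t) v) - ρ (m7mul z t) (ρ y v)
      + (ρ z (ρ (m7mul t y) v) - ρ (m7mul t y) (ρ z v))
      + (ρ t (ρ (m7mul y z) v) - ρ (m7mul y z) (ρ t v)) =
    -(ρ (m7mul (m7mul y z) t) v + ρ (m7mul (m7mul z t) y) v + ρ (m7mul (m7mul t y) z) v) := by
  have a1 := hI y z t v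
  have a2 := hI z t y v
  have a3 := hI t y z v
  rw [m7_anti y t] at a1
  rw [m7_anti z y] at a2
  rw [m7_anti t z] at a3
  simp only [map_neg, LinearMap.neg_apply] at a1 a2 a3
  linear_combination (norm := module) a1 + a2 + a3

/-- The defect operator `K = [R_e, R_h] + 2 R_e`. -/
def kOp (ρ : (Fin 7 → F) →ₗ[F] Module.End F V) (h e : Fin 7 → F) : V →ₗ[F] V :=
  (ρ h) ∘ₗ (ρ e) - (ρ e) ∘ₗ (ρ h) + (2 : F) • ρ e

lemma kOp_def (v : V) : kOp ρ h e1 v = ρ h (ρ e1 v) - ρ e1 (ρ h v) + (2 : F) • ρ e1 v := rfl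

lemma he_swap (v : V) : ρ h (ρ e1 v) = ρ e1 (ρ h v) - (2 : F) • ρ e1 v + kOp ρ h e1 v := by
  rw [kOp_def]; module

lemma kOp_h (hI : MI ρ) (S : M7Std h e1 e2 e3 f1 f2 f3) (v : V) :
    kOp ρ h e1 (ρ h v) = (-2 : F) • kOp ρ h e1 v := by
  have a := hI h e1 h v
  simp only [m7_self, S.he1, m7_anti e1 h, m7_smul_left, map_neg, map_smul, LinearMap.neg_apply,
    LinearMap.smul_apply, map_zero, LinearMap.zero_apply, smul_neg] at a
  simp only [kOp_def]
  linear_combination (norm := module) -a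

lemma h_kOp (hI : MI ρ) (S : M7Std h e1 e2 e3 f1 f2 f3) (v : V) :
    ρ h (kOp ρ h e1 v) = (2 : F) • kOp ρ h e1 v := by
  have a := hI e1 h h v
  simp only [m7_self, S.he1, m7_anti e1 h, m7_smul_left, m7_neg_left, map_neg, map_smul,
    LinearMap.neg_apply,
    LinearMap.smul_apply, map_zero, LinearMap.zero_apply, smul_neg] at a
  simp only [kOp_def, map_add, map_sub, map_smul]
  linear_combination (norm := module) -a

/-- `2 [f₃, f₂] = K₁ - 8 e₁`. -/
lemma comm_ff (h2 : (2 : F) ≠ 0) (hI : MI ρ) (S : M7Std h e1 e2 e3 f1 f2 f3) (v : V) :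
    (2 : F) • (ρ f2 (ρ f3 v) - ρ f3 (ρ f2 v)) = kOp ρ h e1 v - (8 : F) • ρ e1 v := by
  have a := hI.cyc h f2 f3 v
  simp only [S.hf2, S.hf3, S.f23, m7_anti f3 h, m7_anti f3 f2, m7_anti e1 h, S.he1, m7_smul_left,
    m7_neg_left, map_neg,
    map_smul, LinearMap.neg_apply, LinearMap.smul_apply, smul_neg] at a
  refine smul_right_injective V h2 ?_
  simp only [kOp_def]
  linear_combination (norm := module) a

/-- `3 h = Σ [fᵢ, eᵢ]`. -/
lemma three_h (h2 : (2 : F) ≠ 0) (hI : MI ρ) (S : M7Std h e1 e2 e3 f1 f2 f3) (v : V) :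
    (3 : F) • ρ h v = (ρ e1 (ρ f1 v) - ρ f1 (ρ e1 v)) + (ρ e2 (ρ f2 v) - ρ f2 (ρ e2 v))
      + (ρ e3 (ρ f3 v) - ρ f3 (ρ e3 v)) := by
  have a := hI.cyc f1 f2 f3 v
  simp only [S.f23, S.f12, S.f31, S.ef1, S.ef2, S.ef3, m7_smul_left,
    map_smul, LinearMap.smul_apply] at a
  refine smul_right_injective V h2 ?_
  linear_combination (norm := module) -a

/-- flipped version of `he_swap`, `kOp_h`: on `v (h - 2)` the operator `f` shifts by `2`. -/
lemma hf_shift (hI : MI ρ) (S : M7Std h e1 e2 e3 f1 f2 f3) (v : V) :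
    ρ h (ρ f1 (ρ h v - (2 : F) • v)) =
      ρ f1 (ρ h (ρ h v - (2 : F) • v)) + (2 : F) • ρ f1 (ρ h v - (2 : F) • v) := by
  have a := kOp_h hI S.flip v
  simp only [kOp_def, map_neg, LinearMap.neg_apply, neg_neg] at a
  simp only [map_sub, map_smul]
  linear_combination (norm := module) -a

lemma hf_two (hI : MI ρ) (S : M7Std h e1 e2 e3 f1 f2 f3) (v : V) :
    ρ h (ρ h (ρ f1 v)) - ρ h (ρ f1 (ρ h v)) - (2 : F) • ρ f1 (ρ h v) - (4 : F) • ρ f1 v = 0 := by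
  have a := h_kOp hI S.flip v
  simp only [kOp_def, map_neg, LinearMap.neg_apply, neg_neg, map_sub, map_add, map_smul] at a
  linear_combination (norm := module) -a

lemma key_e (h2 : (2 : F) ≠ 0) (hI : MI ρ) (S : M7Std h e1 e2 e3 f1 f2 f3) (v : V) :
    (6 : F) • (ρ e1 (ρ h (ρ h v)) - (2 : F) • ρ e1 (ρ h v)) = (8 : F) • kOp ρ h e1 v := by
  have a2 := hf_shift hI S.rot v
  have a3 := hf_shift hI S.rot.rot v
  have q1 := comm_ff h2 hI S (ρ h v - (2 : F) • v)
  have q2 := comm_ff h2 hI S (ρ h (ρ h v - (2 : F) • v))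
  have b2 := hf_two hI S.rot (ρ f3 (ρ h v - (2 : F) • v))
  have b3 := hf_two hI S.rot.rot (ρ f2 (ρ h v - (2 : F) • v))
  generalize hu : ρ h v - (2 : F) • v = u at a2 a3 q1 q2 b2 b3
  rw [a3] at b2
  rw [a2] at b3
  have q3 := congrArg (ρ h) q1
  have q4 := congrArg (ρ h) q2
  have q5 := congrArg (ρ h) q3
  simp only [map_add, map_sub, map_smul] at q1 q2 q3 q4 q5 b2 b3
  have x : ρ h (ρ h (kOp ρ h e1 u - (8 : F) • ρ e1 u))
      - ρ h (kOp ρ h e1 (ρ h u) - (8 : F) • ρ e1 (ρ h u))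
      - (2 : F) • ρ h (kOp ρ h e1 u - (8 : F) • ρ e1 u)
      - (2 : F) • (kOp ρ h e1 (ρ h u) - (8 : F) • ρ e1 (ρ h u))
      - (8 : F) • (kOp ρ h e1 u - (8 : F) • ρ e1 u) = 0 := by
    simp only [map_sub, map_smul]
    linear_combination (norm := module) (2 : F) • b2 - (2 : F) • b3 - q5 + q4 + (2 : F) • q3
      + (2 : F) • q2 + (8 : F) • q1
  rw [← hu] at x
  simp only [map_add, map_sub, map_smul, he_swap (h := h) (e1 := e1), kOp_h hI S, h_kOp hI S] at x
  have h8 : (8 : F) ≠ 0 := by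
    have : (8 : F) = 2 ^ 3 := by norm_num
    rw [this]; exact pow_ne_zero _ h2
  refine smul_right_injective V h8 ?_
  linear_combination (norm := module) x

lemma six_ne (h2 : (2 : F) ≠ 0) (h3 : (3 : F) ≠ 0) : (6 : F) ≠ 0 := by
  have : (6 : F) = 2 * 3 := by norm_num
  rw [this]; exact mul_ne_zero h2 h3

/-- `N = h³ - 4h` is killed by `e₁`. -/
lemma e_cube (h2 : (2 : F) ≠ 0) (h3 : (3 : F) ≠ 0) (hI : MI ρ) (S : M7Std h e1 e2 e3 f1 f2 f3)
    (v : V) : ρ e1 (ρ h (ρ h (ρ h v)) - (4 : F) • ρ h v) = 0 := by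
  have a := key_e h2 hI S (ρ h v + (2 : F) • v)
  simp only [map_add, map_smul, kOp_h hI S] at a
  refine (smul_eq_zero.mp ?_).resolve_left (six_ne h2 h3)
  simp only [map_sub, map_smul]
  linear_combination (norm := module) a

lemma f_cube (h2 : (2 : F) ≠ 0) (h3 : (3 : F) ≠ 0) (hI : MI ρ) (S : M7Std h e1 e2 e3 f1 f2 f3)
    (v : V) : ρ f1 (ρ h (ρ h (ρ h v)) - (4 : F) • ρ h v) = 0 := by
  have a := e_cube h2 h3 hI S.flip v
  simp only [map_neg, LinearMap.neg_apply, neg_neg, map_sub, map_smul] at a ⊢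
  linear_combination (norm := module) a

lemma h_cube (h2 : (2 : F) ≠ 0) (h3 : (3 : F) ≠ 0) (hI : MI ρ) (S : M7Std h e1 e2 e3 f1 f2 f3)
    (v : V) : ρ h (ρ h (ρ h (ρ h v)) - (4 : F) • ρ h v) = 0 := by
  have a := three_h h2 hI S (ρ h (ρ h (ρ h v)) - (4 : F) • ρ h v)
  simp only [e_cube h2 h3 hI S, e_cube h2 h3 hI S.rot, e_cube h2 h3 hI S.rot.rot,
    f_cube h2 h3 hI S, f_cube h2 h3 hI S.rot, f_cube h2 h3 hI S.rot.rot, map_zero, sub_zero,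
    add_zero] at a
  exact (smul_eq_zero.mp a).resolve_left h3

/-! ### Action on the eigenspaces of `h` -/

lemma zero_e (h2 : (2 : F) ≠ 0) (hI : MI ρ) (S : M7Std h e1 e2 e3 f1 f2 f3) {w : V}
    (hw : ρ h w = 0) : ρ h (ρ e1 w) = (-2 : F) • ρ e1 w := by
  have a := kOp_h hI S w
  rw [hw, map_zero, eq_comm, smul_eq_zero, neg_eq_zero] at a
  rw [he_swap, hw, a.resolve_left h2, map_zero]; module

lemma zero_f (h2 : (2 : F) ≠ 0) (hI : MI ρ) (S : M7Std h e1 e2 e3 f1 f2 f3) {w : V}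
    (hw : ρ h w = 0) : ρ h (ρ f1 w) = (2 : F) • ρ f1 w := by
  have a := zero_e h2 hI S.flip (w := w) (by simp [hw])
  simp only [map_neg, LinearMap.neg_apply, neg_neg] at a
  rw [a]; module

lemma four_ne (h2 : (2 : F) ≠ 0) : (4 : F) ≠ 0 := by
  have : (4 : F) = 2 * 2 := by norm_num
  rw [this]; exact mul_ne_zero h2 h2

lemma two_e (h2 : (2 : F) ≠ 0) (hI : MI ρ) (S : M7Std h e1 e2 e3 f1 f2 f3) {u : V}
    (hu : ρ h u = (2 : F) • u) : ρ h (ρ e1 u) = 0 := by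
  have a := kOp_h hI S u
  rw [hu, map_smul] at a
  have b : (4 : F) • kOp ρ h e1 u = 0 := by linear_combination (norm := module) a
  rw [smul_eq_zero] at b
  rw [he_swap, hu, b.resolve_left (four_ne h2), map_smul]; module

lemma mtwo_f (h2 : (2 : F) ≠ 0) (hI : MI ρ) (S : M7Std h e1 e2 e3 f1 f2 f3) {u : V}
    (hu : ρ h u = (-2 : F) • u) : ρ h (ρ f1 u) = 0 := by
  have a := two_e h2 hI S.flip (u := u) (by simp only [map_neg, LinearMap.neg_apply, hu]; module)
  simpa using a

lemma mtwo_e (h2 : (2 : F) ≠ 0) (hI : MI ρ) (S : M7Std h e1 e2 e3 f1 f2 f3)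
    (hN : ∀ v, ρ h (ρ h (ρ h v)) = (4 : F) • ρ h v) {u : V}
    (hu : ρ h u = (-2 : F) • u) : ρ h (ρ e1 u) = (2 : F) • ρ e1 u := by
  have a := he_swap (ρ := ρ) (h := h) (e1 := e1) u
  rw [hu, map_smul] at a
  have b := h_kOp hI S u
  have c := congrArg (ρ h) a
  simp only [map_add, map_sub, map_smul, b] at c
  have d := congrArg (ρ h) c
  simp only [map_add, map_sub, map_smul, b, hN] at d
  have e : (8 : F) • (ρ h (ρ e1 u) - (2 : F) • ρ e1 u) = 0 := by
    linear_combination (norm := module) -d + (4 : F) • c - (4 : F) • a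
  have h8 : (8 : F) ≠ 0 := by
    have : (8 : F) = 2 ^ 3 := by norm_num
    rw [this]; exact pow_ne_zero _ h2
  exact sub_eq_zero.mp ((smul_eq_zero.mp e).resolve_left h8)

lemma two_f (h2 : (2 : F) ≠ 0) (hI : MI ρ) (S : M7Std h e1 e2 e3 f1 f2 f3)
    (hN : ∀ v, ρ h (ρ h (ρ h v)) = (4 : F) • ρ h v) {u : V}
    (hu : ρ h u = (2 : F) • u) : ρ h (ρ f1 u) = (-2 : F) • ρ f1 u := by
  have a := mtwo_e h2 hI S.flip
    (by intro v; simp only [map_neg, LinearMap.neg_apply, neg_neg, hN, smul_neg]) (u := u)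
    (by simp only [map_neg, LinearMap.neg_apply, hu]; module)
  simp only [map_neg, LinearMap.neg_apply, neg_neg] at a
  rw [a]; module

lemma M7Std.swap (S : M7Std h e1 e2 e3 f1 f2 f3) :
    M7Std h (-e1) (-e3) (-e2) (-f1) (-f3) (-f2) := by
  constructor <;> simp only [m7_neg_left, m7_neg_right, neg_neg, S.he1, S.he2, S.he3, S.hf1,
    S.hf2, S.hf3, m7_anti e1 e3, m7_anti e3 e2, m7_anti e2 e1, m7_anti f1 f3, m7_anti f3 f2,
    m7_anti f2 f1, S.e12, S.e23, S.e31, S.f12, S.f23, S.f31,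
    S.ef1, S.ef2, S.ef3, S.ef12, S.ef13, S.ef21, S.ef23, S.ef31, S.ef32, neg_zero] <;> module

/-- Products `w fᵢ fⱼ` for `w` in the zero eigenspace. -/
lemma zero_ff (h2 : (2 : F) ≠ 0) (h3 : (3 : F) ≠ 0) (hI : MI ρ) (S : M7Std h e1 e2 e3 f1 f2 f3)
    (hN : ∀ v, ρ h (ρ h (ρ h v)) = (4 : F) • ρ h v) {w : V} (hw : ρ h w = 0) :
    ρ f3 (ρ f2 w) = (2 : F) • ρ e1 w ∧ ρ f2 (ρ f3 w) = (-2 : F) • ρ e1 w ∧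
      ρ f1 (ρ f1 w) = 0 := by
  have c1 := two_f h2 hI S hN (zero_f h2 hI S hw)
  have c2 := two_f h2 hI S.rot hN (zero_f h2 hI S.rot.rot hw)
  have c3 := two_f h2 hI S.rot.rot hN (zero_f h2 hI S.rot hw)
  have a := hI f2 f3 h w
  have b := hI f3 f2 h w
  have c := hI f1 f1 h w
  simp only [m7_anti f1 h, m7_anti f2 h, m7_anti f3 h, m7_anti f3 f2, m7_anti e1 h, m7_self,
    m7_zero_left, S.hf1, S.hf2, S.hf3,
    S.f23, S.he1, m7_smul_left, m7_neg_left, map_neg, map_smul, map_zero, LinearMap.neg_apply,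
    LinearMap.zero_apply, LinearMap.smul_apply, smul_neg, hw, c1, c2, c3] at a b c
  have h6 := six_ne h2 h3
  refine ⟨smul_right_injective V h6 ?_, smul_right_injective V h6 ?_,
    (smul_eq_zero.mp ?_).resolve_left h6⟩
  · linear_combination (norm := module) (2 : F) • b - a
  · linear_combination (norm := module) (2 : F) • a - b
  · linear_combination (norm := module) c

lemma zero_ee (h2 : (2 : F) ≠ 0) (h3 : (3 : F) ≠ 0) (hI : MI ρ) (S : M7Std h e1 e2 e3 f1 f2 f3)
    (hN : ∀ v, ρ h (ρ h (ρ h v)) = (4 : F) • ρ h v) {w : V} (hw : ρ h w = 0) :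
    ρ e3 (ρ e2 w) = (-2 : F) • ρ f1 w ∧ ρ e2 (ρ e3 w) = (2 : F) • ρ f1 w ∧
      ρ e1 (ρ e1 w) = 0 := by
  have a := zero_ff h2 h3 hI S.flip
    (by intro v; simp only [map_neg, LinearMap.neg_apply, neg_neg, hN, smul_neg]) (w := w)
    (by simp [hw])
  simp only [map_neg, LinearMap.neg_apply, neg_neg] at a
  refine ⟨a.1.trans (by module), a.2.1.trans (by module), a.2.2⟩

/-- On the zero eigenspace `e`'s and `f`'s commute. -/
lemma zero_comm (h2 : (2 : F) ≠ 0) (hI : MI ρ) (S : M7Std h e1 e2 e3 f1 f2 f3) {w : V}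
    (hw : ρ h w = 0) : ρ f1 (ρ e1 w) = ρ e1 (ρ f1 w) ∧ ρ f2 (ρ e1 w) = ρ e1 (ρ f2 w) := by
  have a := hI h e1 f1 w
  have b := hI h e1 f2 w
  simp only [S.hf1, S.hf2, S.he1, S.ef1, S.ef12, m7_smul_left, map_smul, map_zero,
    LinearMap.zero_apply, LinearMap.smul_apply, hw, zero_f h2 hI S hw, zero_f h2 hI S.rot hw]
    at a b
  refine ⟨smul_right_injective V h2 ?_, smul_right_injective V h2 ?_⟩
  · linear_combination (norm := module) -a
  · linear_combination (norm := module) -b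

lemma zero_ef_e (h2 : (2 : F) ≠ 0) (h3 : (3 : F) ≠ 0) (hI : MI ρ)
    (S : M7Std h e1 e2 e3 f1 f2 f3)
    (hN : ∀ v, ρ h (ρ h (ρ h v)) = (4 : F) • ρ h v) {w : V} (hw : ρ h w = 0) :
    ρ e1 (ρ f2 (ρ e1 w)) = 0 ∧ ρ e2 (ρ f2 (ρ e1 w)) = 0 ∧ ρ e3 (ρ f2 (ρ e1 w)) = 0 := by
  have p1 := zero_ee h2 h3 hI S hN hw
  have p2 := zero_ee h2 h3 hI S.rot hN hw
  have p3 := zero_ee h2 h3 hI S.rot.rot hN hw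
  have q1 := zero_ff h2 h3 hI S hN hw
  have q2 := zero_ff h2 h3 hI S.rot hN hw
  have a := hI e1 f2 e1 w
  have b := hI e1 f2 e2 w
  have c := hI e1 f2 e3 w
  simp only [m7_self, m7_anti f2 e1, m7_anti f2 e2, m7_anti f2 e3, m7_anti e1 e3, S.ef12, S.ef2,
    S.ef32, S.e12, S.e31, m7_zero_left, m7_smul_left, m7_neg_left, map_neg, map_smul, map_zero,
    LinearMap.neg_apply, neg_zero, hw, p1, p2, p3, q1, q2,
    LinearMap.zero_apply, LinearMap.smul_apply] at a b c
  refine ⟨?_, ?_, ?_⟩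
  · linear_combination (norm := module) -a
  · linear_combination (norm := module) -b
  · linear_combination (norm := module) -c

lemma zero_ef_f (h2 : (2 : F) ≠ 0) (h3 : (3 : F) ≠ 0) (hI : MI ρ)
    (S : M7Std h e1 e2 e3 f1 f2 f3)
    (hN : ∀ v, ρ h (ρ h (ρ h v)) = (4 : F) • ρ h v) {w : V} (hw : ρ h w = 0) :
    ρ f1 (ρ f2 (ρ e1 w)) = 0 ∧ ρ f2 (ρ f2 (ρ e1 w)) = 0 ∧ ρ f3 (ρ f2 (ρ e1 w)) = 0 := by
  rw [(zero_comm h2 hI S hw).2]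
  have a := zero_ef_e h2 h3 hI S.swap.rot.rot.flip
    (by intro v; simp only [map_neg, LinearMap.neg_apply, neg_neg, hN, smul_neg]) (w := w)
    (by simp [hw])
  simp only [map_neg, LinearMap.neg_apply, neg_neg] at a
  exact ⟨a.2.1, a.1, a.2.2⟩

/-- Hypothesis: there are no invariants. -/
def NoInv (ρ : (Fin 7 → F) →ₗ[F] Module.End F V) (h e1 e2 e3 f1 f2 f3 : Fin 7 → F) : Prop :=
  ∀ u : V, ρ h u = 0 → ρ e1 u = 0 → ρ e2 u = 0 → ρ e3 u = 0 → ρ f1 u = 0 → ρ f2 u = 0 →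
    ρ f3 u = 0 → u = 0

lemma NoInv.rot (hZ : NoInv ρ h e1 e2 e3 f1 f2 f3) : NoInv ρ h e2 e3 e1 f2 f3 f1 :=
  fun u a b c d e f g => hZ u a d b c g e f

lemma NoInv.swap (hZ : NoInv ρ h e1 e2 e3 f1 f2 f3) :
    NoInv ρ h (-e1) (-e3) (-e2) (-f1) (-f3) (-f2) := by
  intro u a b c d e f g
  simp only [map_neg, LinearMap.neg_apply, neg_eq_zero] at b c d e f g
  exact hZ u a b d c e g f

lemma zero_ef12 (h2 : (2 : F) ≠ 0) (h3 : (3 : F) ≠ 0) (hI : MI ρ)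
    (S : M7Std h e1 e2 e3 f1 f2 f3) (hZ : NoInv ρ h e1 e2 e3 f1 f2 f3)
    (hN : ∀ v, ρ h (ρ h (ρ h v)) = (4 : F) • ρ h v) {w : V} (hw : ρ h w = 0) :
    ρ f2 (ρ e1 w) = 0 ∧ ρ e1 (ρ f2 w) = 0 := by
  have a := zero_ef_e h2 h3 hI S hN hw
  have b := zero_ef_f h2 h3 hI S hN hw
  have c := mtwo_f h2 hI S.rot (zero_e h2 hI S hw)
  have d := hZ _ c a.1 a.2.1 a.2.2 b.1 b.2.1 b.2.2
  exact ⟨d, (zero_comm h2 hI S hw).2 ▸ d⟩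

lemma zero_ef13 (h2 : (2 : F) ≠ 0) (h3 : (3 : F) ≠ 0) (hI : MI ρ)
    (S : M7Std h e1 e2 e3 f1 f2 f3) (hZ : NoInv ρ h e1 e2 e3 f1 f2 f3)
    (hN : ∀ v, ρ h (ρ h (ρ h v)) = (4 : F) • ρ h v) {w : V} (hw : ρ h w = 0) :
    ρ f3 (ρ e1 w) = 0 ∧ ρ e1 (ρ f3 w) = 0 := by
  have a := zero_ef12 h2 h3 hI S.swap hZ.swap hN hw
  simpa using a

/-- The products `w eᵢ fᵢ` satisfy `a₂ + a₃ = 2 a₁`. -/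
lemma zero_sum (h2 : (2 : F) ≠ 0) (h3 : (3 : F) ≠ 0) (hI : MI ρ)
    (S : M7Std h e1 e2 e3 f1 f2 f3)
    (hN : ∀ v, ρ h (ρ h (ρ h v)) = (4 : F) • ρ h v) {w : V} (hw : ρ h w = 0) :
    ρ f2 (ρ e2 w) + ρ f3 (ρ e3 w) = (2 : F) • ρ f1 (ρ e1 w) := by
  have q1 := zero_ff h2 h3 hI S hN hw
  have q2 := zero_ff h2 h3 hI S.rot hN hw
  have a := hI f3 f1 f2 w
  have c := (zero_comm h2 hI S hw).1
  simp only [m7_anti f3 f2, S.f12, S.f31, S.f23, S.ef2, m7_smul_left, map_neg, map_smul,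
    LinearMap.neg_apply, LinearMap.smul_apply, q1, q2, hw, ← c] at a
  refine smul_right_injective V h2 ?_
  linear_combination (norm := module) -a

lemma zero_eq (h2 : (2 : F) ≠ 0) (h3 : (3 : F) ≠ 0) (hI : MI ρ)
    (S : M7Std h e1 e2 e3 f1 f2 f3)
    (hN : ∀ v, ρ h (ρ h (ρ h v)) = (4 : F) • ρ h v) {w : V} (hw : ρ h w = 0) :
    ρ f2 (ρ e2 w) = ρ f1 (ρ e1 w) := by
  have a := zero_sum h2 h3 hI S hN hw
  have b := zero_sum h2 h3 hI S.rot hN hw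
  refine smul_right_injective V h3 ?_
  linear_combination (norm := module) a - b

lemma zero_efe (h2 : (2 : F) ≠ 0) (h3 : (3 : F) ≠ 0) (hI : MI ρ)
    (S : M7Std h e1 e2 e3 f1 f2 f3)
    (hN : ∀ v, ρ h (ρ h (ρ h v)) = (4 : F) • ρ h v) {w : V} (hw : ρ h w = 0) :
    ρ e1 (ρ f1 (ρ e1 w)) = (2 : F) • ρ e1 w ∧ ρ f1 (ρ f1 (ρ e1 w)) = (2 : F) • ρ f1 w := by
  have q1 := zero_ff h2 h3 hI S hN hw
  have q2 := zero_ee h2 h3 hI S hN hw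
  have c := (zero_comm h2 hI S hw).1
  have a := hI e1 f1 e1 w
  have b := hI f1 e1 f1 w
  simp only [m7_self, m7_anti f1 e1, S.ef1, S.he1, S.hf1, m7_neg_left, map_neg, map_smul,
    map_zero, LinearMap.zero_apply,
    LinearMap.neg_apply, LinearMap.smul_apply, q1, q2, hw] at a b
  rw [← c] at b
  constructor
  · linear_combination (norm := module) -a
  · linear_combination (norm := module) -b

lemma zero_ef11 (h2 : (2 : F) ≠ 0) (h3 : (3 : F) ≠ 0) (hI : MI ρ)
    (S : M7Std h e1 e2 e3 f1 f2 f3) (hZ : NoInv ρ h e1 e2 e3 f1 f2 f3)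
    (hN : ∀ v, ρ h (ρ h (ρ h v)) = (4 : F) • ρ h v) {w : V} (hw : ρ h w = 0) :
    ρ f1 (ρ e1 w) = (2 : F) • w ∧ ρ e1 (ρ f1 w) = (2 : F) • w := by
  have c := (zero_comm h2 hI S hw).1
  have e12 := zero_eq h2 h3 hI S hN hw
  have e23 := zero_eq h2 h3 hI S.rot hN hw
  have g1 := zero_efe h2 h3 hI S hN hw
  have g2 := zero_efe h2 h3 hI S.rot hN hw
  have g3 := zero_efe h2 h3 hI S.rot.rot hN hw
  rw [e12] at g2
  rw [e23, e12] at g3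
  have d : ρ f1 (ρ e1 w) - (2 : F) • w = 0 := by
    apply hZ
    · rw [map_sub, map_smul, hw, mtwo_f h2 hI S (zero_e h2 hI S hw)]; simp
    all_goals simp only [map_sub, map_smul, g1, g2, g3, sub_self]
  have d' := sub_eq_zero.mp d
  exact ⟨d', c ▸ d'⟩

/-- If the zero eigenspace vanishes, so does the `2`-eigenspace. -/
lemma two_zero (h2 : (2 : F) ≠ 0) (h3 : (3 : F) ≠ 0) (hI : MI ρ)
    (S : M7Std h e1 e2 e3 f1 f2 f3)
    (hN : ∀ v, ρ h (ρ h (ρ h v)) = (4 : F) • ρ h v)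
    (hV : ∀ w, ρ h w = 0 → w = 0) {u : V} (hu : ρ h u = (2 : F) • u) : u = 0 := by
  have ue : ∀ {e1 e2 e3 f1 f2 f3 : Fin 7 → F}, M7Std h e1 e2 e3 f1 f2 f3 → ρ e1 u = 0 :=
    fun S => hV _ (two_e h2 hI S hu)
  have key : ∀ {e1 e2 e3 f1 f2 f3 : Fin 7 → F}, M7Std h e1 e2 e3 f1 f2 f3 →
      ρ e1 (ρ f1 u) = (4 : F) • u := by
    intro e1 e2 e3 f1 f2 f3 S
    have a := hI h e1 f1 u
    simp only [S.hf1, S.he1, S.ef1, m7_smul_left, map_smul, LinearMap.smul_apply, hu, ue S,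
      two_f h2 hI S hN hu, map_zero, smul_zero] at a
    refine smul_right_injective V h2 ?_
    linear_combination (norm := module) -a
  have t := three_h h2 hI S u
  rw [key S, key S.rot, key S.rot.rot, ue S, ue S.rot, ue S.rot.rot, hu] at t
  simp only [map_zero, sub_zero] at t
  refine (smul_eq_zero.mp (?_ : (6 : F) • u = 0)).resolve_left (six_ne h2 h3)
  linear_combination (norm := module) -t

lemma exists_zero (h2 : (2 : F) ≠ 0) (h3 : (3 : F) ≠ 0) (hI : MI ρ)
    (S : M7Std h e1 e2 e3 f1 f2 f3)
    (hN : ∀ v, ρ h (ρ h (ρ h v)) = (4 : F) • ρ h v)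
    (hV : ∀ w, ρ h w = 0 → w = 0) (v : V) : v = 0 := by
  have sq : ρ h (ρ h v) - (4 : F) • v = 0 := by
    apply hV
    rw [map_sub, map_smul, hN, sub_self]
  have a : ρ h v + (2 : F) • v = 0 := by
    apply two_zero h2 h3 hI S hN hV
    rw [map_add, map_smul]
    linear_combination (norm := module) sq
  have b : ρ h v - (2 : F) • v = 0 := by
    apply two_zero h2 h3 hI S.flip
      (by intro v; simp only [map_neg, LinearMap.neg_apply, neg_neg, hN, smul_neg])
      (by intro w hw; exact hV w (by simpa using hw))
    simp only [map_neg, LinearMap.neg_apply, map_sub, map_smul]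
    linear_combination (norm := module) -sq
  refine (smul_eq_zero.mp (?_ : (4 : F) • v = 0)).resolve_left (four_ne h2)
  linear_combination (norm := module) a - b

/-- the standard basis vectors of `M₇(F)` -/
def bv (F : Type*) [Field F] (i : Fin 7) : Fin 7 → F := Pi.single i 1

lemma bv_std : M7Std (bv F 0) (bv F 1) (bv F 2) (bv F 3) (bv F 4) (bv F 5) (bv F 6) := by
  constructor <;> ext i <;> fin_cases i <;> simp [m7mul, bv]

lemma bv_expand (a : Fin 7 → F) : a = a 0 • bv F 0 + a 1 • bv F 1 + a 2 • bv F 2 + a 3 • bv F 3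
    + a 4 • bv F 4 + a 5 • bv F 5 + a 6 • bv F 6 := by
  ext i; fin_cases i <;> simp [bv]

lemma rho_expand (a : Fin 7 → F) (u : V) : ρ a u = a 0 • ρ (bv F 0) u + a 1 • ρ (bv F 1) u
    + a 2 • ρ (bv F 2) u + a 3 • ρ (bv F 3) u + a 4 • ρ (bv F 4) u + a 5 • ρ (bv F 5) u
    + a 6 • ρ (bv F 6) u := by
  conv_lhs => rw [bv_expand a]
  simp only [map_add, map_smul, LinearMap.add_apply, LinearMap.smul_apply]

/-- the comparison map -/
def psiMap (ρ : (Fin 7 → F) →ₗ[F] Module.End F V) (w : V) : (Fin 7 → F) →ₗ[F] V where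
  toFun x := (2 * x 0) • w + x 1 • ρ (bv F 1) w + x 2 • ρ (bv F 2) w + x 3 • ρ (bv F 3) w
    - x 4 • ρ (bv F 4) w - x 5 • ρ (bv F 5) w - x 6 • ρ (bv F 6) w
  map_add' x y := by simp only [Pi.add_apply]; module
  map_smul' c x := by simp only [Pi.smul_apply, smul_eq_mul, RingHom.id_apply]; module

lemma psiMap_apply (w : V) (x : Fin 7 → F) : psiMap ρ w x =
    (2 * x 0) • w + x 1 • ρ (bv F 1) w + x 2 • ρ (bv F 2) w + x 3 • ρ (bv F 3) w
    - x 4 • ρ (bv F 4) w - x 5 • ρ (bv F 5) w - x 6 • ρ (bv F 6) w := rfl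

lemma noInv_bv (hne : ρ ≠ 0)
    (hirr : ∀ W : Submodule F V,
      (∀ v ∈ W, ∀ a : Fin 7 → F, ρ a v ∈ W) → W = ⊥ ∨ W = ⊤) :
    NoInv ρ (bv F 0) (bv F 1) (bv F 2) (bv F 3) (bv F 4) (bv F 5) (bv F 6) := by
  intro u u0 u1 u2 u3 u4 u5 u6
  let W : Submodule F V :=
    { carrier := {u | ∀ a, ρ a u = 0}
      add_mem' := by
        intro x y hx hy a
        rw [map_add, hx a, hy a, add_zero]
      zero_mem' := fun a => map_zero _
      smul_mem' := by
        intro c x hx a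
        rw [map_smul, hx a, smul_zero] }
  have hu : u ∈ W := by
    intro a
    rw [rho_expand, u0, u1, u2, u3, u4, u5, u6]
    simp
  rcases hirr W (by intro v hv a; rw [hv a]; exact W.zero_mem) with hW | hW
  · rw [hW] at hu
    simpa using hu
  · exfalso
    apply hne
    ext1 i
    ext v
    have : v ∈ W := by rw [hW]; trivial
    exact this _

lemma psiMap_mul (h2 : (2 : F) ≠ 0) (h3 : (3 : F) ≠ 0) (hI : MI ρ)
    (hZ : NoInv ρ (bv F 0) (bv F 1) (bv F 2) (bv F 3) (bv F 4) (bv F 5) (bv F 6))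
    (hN : ∀ v, ρ (bv F 0) (ρ (bv F 0) (ρ (bv F 0) v)) = (4 : F) • ρ (bv F 0) v)
    {w : V} (hw : ρ (bv F 0) w = 0) (x a : Fin 7 → F) :
    psiMap ρ w (m7mul x a) = ρ a (psiMap ρ w x) := by
  have S := bv_std (F := F)
  have S1 := S.rot
  have S2 := S.rot.rot
  obtain ⟨p1, p2, p3⟩ := zero_ff h2 h3 hI S hN hw
  obtain ⟨p4, p5, p6⟩ := zero_ff h2 h3 hI S1 hN hw
  obtain ⟨p7, p8, p9⟩ := zero_ff h2 h3 hI S2 hN hw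
  obtain ⟨q1, q2, q3⟩ := zero_ee h2 h3 hI S hN hw
  obtain ⟨q4, q5, q6⟩ := zero_ee h2 h3 hI S1 hN hw
  obtain ⟨q7, q8, q9⟩ := zero_ee h2 h3 hI S2 hN hw
  obtain ⟨r1, r2⟩ := zero_ef12 h2 h3 hI S hZ hN hw
  obtain ⟨r3, r4⟩ := zero_ef12 h2 h3 hI S1 hZ.rot hN hw
  obtain ⟨r5, r6⟩ := zero_ef12 h2 h3 hI S2 hZ.rot.rot hN hw
  obtain ⟨s1, s2⟩ := zero_ef11 h2 h3 hI S hZ hN hw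
  obtain ⟨s3, s4⟩ := zero_ef11 h2 h3 hI S1 hZ.rot hN hw
  obtain ⟨s5, s6⟩ := zero_ef11 h2 h3 hI S2 hZ.rot.rot hN hw
  obtain ⟨t1, t2⟩ := zero_ef13 h2 h3 hI S hZ hN hw
  obtain ⟨t3, t4⟩ := zero_ef13 h2 h3 hI S1 hZ.rot hN hw
  obtain ⟨t5, t6⟩ := zero_ef13 h2 h3 hI S2 hZ.rot.rot hN hw
  have z1 := zero_e h2 hI S hw
  have z2 := zero_e h2 hI S1 hw
  have z3 := zero_e h2 hI S2 hw
  have z4 := zero_f h2 hI S hw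
  have z5 := zero_f h2 hI S1 hw
  have z6 := zero_f h2 hI S2 hw
  rw [rho_expand a (psiMap ρ w x)]
  simp only [psiMap_apply, map_add, map_sub, map_smul, p1, p2, p3, p4, p5, p6, p7, p8, p9, q1, q2,
    q3, q4, q5, q6, q7, q8, q9, r1, r2, r3, r4, r5, r6, s1, s2, s3, s4, s5, s6, t1, t2, t3, t4,
    t5, t6, z1, z2, z3, z4, z5, z6, hw]
  simp only [m7mul, Matrix.cons_val]
  module

set_option maxHeartbeats 2000000 in
lemma psiMap_inj (h2 : (2 : F) ≠ 0) {w : V} (hw0 : w ≠ 0)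
    (hm : ∀ x a, psiMap ρ w (m7mul x a) = ρ a (psiMap ρ w x)) :
    Function.Injective (psiMap ρ w) := by
  rw [injective_iff_map_eq_zero]
  intro x hx
  have H : ∀ y a, psiMap ρ w y = 0 → psiMap ρ w (m7mul y a) = 0 := by
    intro y a hy; rw [hm, hy, map_zero]
  have hh : ∀ c : F, psiMap ρ w (c • bv F 0) = 0 → c = 0 := by
    intro c hc
    have : psiMap ρ w (c • bv F 0) = (2 * c) • w := by
      simp [psiMap_apply, bv]
      module
    rw [this, smul_eq_zero] at hc
    rcases hc with hc | hc
    · exact (mul_eq_zero.mp hc).resolve_left h2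
    · exact absurd hc hw0
  have k1 := H _ (bv F 0) hx
  have k2 := H _ (bv F 0) k1
  have h4 := four_ne h2
  have h8 : (8 : F) ≠ 0 := by
    have : (8 : F) = 2 * 4 := by norm_num
    rw [this]; exact mul_ne_zero h2 h4
  have g0 : x 0 = 0 := by
    have e : psiMap ρ w ((4 * x 0) • bv F 0) = 0 := by
      have : (4 * x 0) • bv F 0 = (4 : F) • x - m7mul (m7mul x (bv F 0)) (bv F 0) := by
        ext i; fin_cases i <;> simp [m7mul, bv] <;> ring
      rw [this, map_sub, map_smul, hx, k2]; simp
    exact (mul_eq_zero.mp (hh _ e)).resolve_left h4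
  have kp : psiMap ρ w (m7mul (m7mul x (bv F 0)) (bv F 0) - (2 : F) • m7mul x (bv F 0)) = 0 := by
    rw [map_sub, map_smul, k1, k2]; simp
  have km : psiMap ρ w (m7mul (m7mul x (bv F 0)) (bv F 0) + (2 : F) • m7mul x (bv F 0)) = 0 := by
    rw [map_add, map_smul, k1, k2]; simp
  have gp : ∀ i : Fin 7, i = 4 ∨ i = 5 ∨ i = 6 → x (i - 3) = 0 := by
    intro i hi
    have e : psiMap ρ w ((8 * x (i - 3)) • bv F 0) = 0 := by
      rw [← H _ (bv F i) kp]
      congr 1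
      rcases hi with rfl | rfl | rfl <;>
      · ext j; fin_cases j <;> simp [m7mul, bv] <;> ring
    exact (mul_eq_zero.mp (hh _ e)).resolve_left h8
  have gm : ∀ i : Fin 7, i = 1 ∨ i = 2 ∨ i = 3 → x (i + 3) = 0 := by
    intro i hi
    have e : psiMap ρ w ((-(8 * x (i + 3))) • bv F 0) = 0 := by
      rw [← H _ (bv F i) km]
      congr 1
      rcases hi with rfl | rfl | rfl <;>
      · ext j; fin_cases j <;> simp [m7mul, bv] <;> ring
    exact (mul_eq_zero.mp (neg_eq_zero.mp (hh _ e))).resolve_left h8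
  ext i
  fin_cases i
  · exact g0
  · exact gp 4 (by simp)
  · exact gp 5 (by simp)
  · exact gp 6 (by simp)
  · exact gm 1 (by simp)
  · exact gm 2 (by simp)
  · exact gm 3 (by simp)
end M7Irred
/-- Every irreducible Malcev module over `M₇(F)` is isomorphic to the regular
module. -/
theorem stmt15_irreducible_is_regular
    {F V : Type*} [Field F] [AddCommGroup V] [Module F V]
    (h2 : (2 : F) ≠ 0) (h3 : (3 : F) ≠ 0)
    (ρ : (Fin 7 → F) →ₗ[F] Module.End F V)
    (hmod : IsMalcevFun (sneFun m7mul ρ))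
    (hne : ρ ≠ 0)
    (hirr : ∀ W : Submodule F V,
      (∀ v ∈ W, ∀ a : Fin 7 → F, ρ a v ∈ W) → W = ⊥ ∨ W = ⊤) :
    ∃ ψ : (Fin 7 → F) →ₗ[F] V, Function.Bijective ψ ∧
      ∀ x a : Fin 7 → F, ψ (m7mul x a) = ρ a (ψ x) := by
  have hI := mi_of_malcev h2 ρ hmod
  have S := bv_std (F := F)
  have hZ := noInv_bv hne hirr
  have hN : ∀ v, ρ (bv F 0) (ρ (bv F 0) (ρ (bv F 0) v)) = (4 : F) • ρ (bv F 0) v := by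
    intro v
    rw [← sub_eq_zero]
    exact hZ _ (h_cube h2 h3 hI S v) (e_cube h2 h3 hI S v) (e_cube h2 h3 hI S.rot v)
      (e_cube h2 h3 hI S.rot.rot v) (f_cube h2 h3 hI S v) (f_cube h2 h3 hI S.rot v)
      (f_cube h2 h3 hI S.rot.rot v)
  obtain ⟨w, hw, hw0⟩ : ∃ w : V, ρ (bv F 0) w = 0 ∧ w ≠ 0 := by
    by_contra hcon
    push Not at hcon
    apply hne
    ext1 i
    ext v
    exact exists_zero h2 h3 hI S hN hcon _
  have hm := psiMap_mul h2 h3 hI hZ hN hw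
  refine ⟨psiMap ρ w, ⟨psiMap_inj h2 hw0 hm, ?_⟩, hm⟩
  rw [← LinearMap.range_eq_top]
  refine (hirr _ ?_).resolve_left ?_
  · rintro _ ⟨x, rfl⟩ a
    exact ⟨m7mul x a, hm x a⟩
  · intro hb
    have hmem : psiMap ρ w (bv F 0) ∈ LinearMap.range (psiMap ρ w) := ⟨_, rfl⟩
    rw [hb, Submodule.mem_bot] at hmem
    have : psiMap ρ w (bv F 0) = (2 : F) • w := by
      simp [psiMap_apply, bv]
    rw [this, smul_eq_zero] at hmem
    exact hmem.elim h2 hw0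
end
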